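/- (Count of maximal ST-pairs of M_{n,n}) Let n ≥ 3. The number of maximal ST-pairs of M_{n,n} is exactly n² + 8n − 6; moreover these are divided among the five types as follows: 4n − 1 pairs of type T-chain, 2n − 2 of type S-link, n² − 2n + 1 of type S-2-links, 2n − 2 of type S-level, and 2n − 2 of type S-level-minus-link. -/

import Mathlib

set_option linter.unreachableTactic false
set_option linter.unusedTactic false
set_option linter.unnecessarySeqFocus false

/-- The underlying set of the lattice `M_{n,n}`: a bottom element `0`, a top
element `1`, and two levels `a₁, …, aₙ` and `b₁, …, bₙ`.  Here `a i` (for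
`i : Fin n`) stands for `a_{i+1}` and `b j` for `b_{j+1}`, so the link elements
are `aₙ = a ⟨n-1, _⟩` and `b₁ = b ⟨0, _⟩`. -/
inductive Mnn (n : ℕ) : Type where
  | bot : Mnn n
  | top : Mnn n
  | a : Fin n → Mnn n
  | b : Fin n → Mnn n
deriving DecidableEq

namespace Mnn

/-- The order of `M_{n,n}`: `0` is least, `1` is greatest, `aᵢ ≤ b₁` for every
`i`, `aₙ ≤ bⱼ` for every `j`, and there are no other comparabilities besides
those forced by reflexivity. -/
def le {n : ℕ} : Mnn n → Mnn n → Prop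
  | .bot, _ => True
  | .top, .top => True
  | .top, .bot => False
  | .top, .a _ => False
  | .top, .b _ => False
  | .a _, .top => True
  | .a _, .bot => False
  | .a i, .a j => i = j
  | .a i, .b j => (j : ℕ) = 0 ∨ (i : ℕ) = n - 1
  | .b _, .top => True
  | .b _, .bot => False
  | .b _, .a _ => False
  | .b i, .b j => i = j

/-- The join operation of `M_{n,n}`. -/
def sup {n : ℕ} : Mnn n → Mnn n → Mnn n
  | .bot, x => x
  | .top, _ => .top
  | .a i, .bot => .a i
  | .a _, .top => .top
  | .a i, .a j => if i = j then .a i else .b ⟨0, Nat.lt_of_le_of_lt (Nat.zero_le _) i.isLt⟩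
  | .a i, .b j => if (j : ℕ) = 0 ∨ (i : ℕ) = n - 1 then .b j else .top
  | .b i, .bot => .b i
  | .b _, .top => .top
  | .b i, .a j => if (i : ℕ) = 0 ∨ (j : ℕ) = n - 1 then .b i else .top
  | .b i, .b j => if i = j then .b i else .top

/-- The meet operation of `M_{n,n}`. -/
def inf {n : ℕ} : Mnn n → Mnn n → Mnn n
  | .bot, _ => .bot
  | .top, x => x
  | .a _, .bot => .bot
  | .a i, .top => .a i
  | .a i, .a j => if i = j then .a i else .bot
  | .a i, .b j => if (j : ℕ) = 0 ∨ (i : ℕ) = n - 1 then .a i else .bot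
  | .b _, .bot => .bot
  | .b i, .top => .b i
  | .b i, .a j => if (i : ℕ) = 0 ∨ (j : ℕ) = n - 1 then .a j else .bot
  | .b i, .b j => if i = j then .b i
      else .a ⟨n - 1, Nat.sub_lt (Nat.lt_of_le_of_lt (Nat.zero_le _) i.isLt) Nat.one_pos⟩

theorem le_refl' {n : ℕ} (x : Mnn n) : le x x := by cases x <;> simp [le]

theorem le_trans' {n : ℕ} (x y z : Mnn n) (hxy : le x y) (hyz : le y z) : le x z := by
  cases x <;> cases y <;> cases z <;> simp_all [le] <;> omega

theorem le_antisymm' {n : ℕ} (x y : Mnn n) (hxy : le x y) (hyx : le y x) : x = y := by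
  cases x <;> cases y <;> simp_all [le]

theorem le_sup_left' {n : ℕ} (x y : Mnn n) : le x (sup x y) := by
  cases x <;> cases y <;> dsimp only [sup] <;> (try split_ifs) <;> simp_all [le]

theorem le_sup_right' {n : ℕ} (x y : Mnn n) : le y (sup x y) := by
  cases x <;> cases y <;> dsimp only [sup] <;> (try split_ifs) <;> simp_all [le]

theorem sup_le' {n : ℕ} (x y z : Mnn n) (hxz : le x z) (hyz : le y z) :
    le (sup x y) z := by
  cases x <;> cases y <;> cases z <;> dsimp only [sup] <;> (try split_ifs) <;>
    simp_all [le, Fin.ext_iff] <;> omega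

theorem inf_le_left' {n : ℕ} (x y : Mnn n) : le (inf x y) x := by
  cases x <;> cases y <;> dsimp only [inf] <;> (try split_ifs) <;> simp_all [le]

theorem inf_le_right' {n : ℕ} (x y : Mnn n) : le (inf x y) y := by
  cases x <;> cases y <;> dsimp only [inf] <;> (try split_ifs) <;> simp_all [le]

theorem le_inf' {n : ℕ} (x y z : Mnn n) (hxy : le x y) (hxz : le x z) :
    le x (inf y z) := by
  cases x <;> cases y <;> cases z <;> dsimp only [inf] <;> (try split_ifs) <;>
    simp_all [le, Fin.ext_iff] <;> omega

/-- `M_{n,n}` is a lattice. -/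
instance instLattice (n : ℕ) : Lattice (Mnn n) where
  le := le
  sup := sup
  inf := inf
  le_refl := le_refl'
  le_trans := le_trans'
  le_antisymm := le_antisymm'
  le_sup_left := le_sup_left'
  le_sup_right := le_sup_right'
  sup_le := sup_le'
  inf_le_left := inf_le_left'
  inf_le_right := inf_le_right'
  le_inf := le_inf'

/-- `M_{n,n}* = M_{n,n} ∖ {0, 1}`, the set of non-identity elements. -/
def star (n : ℕ) : Set (Mnn n) := {x | x ≠ .bot ∧ x ≠ .top}

/-- The level `{a₁, …, aₙ}` of `M_{n,n}`. -/
def aLevel (n : ℕ) : Set (Mnn n) := Set.range Mnn.a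

/-- The level `{b₁, …, bₙ}` of `M_{n,n}`. -/
def bLevel (n : ℕ) : Set (Mnn n) := Set.range Mnn.b

/-- The link element `aₙ` of the level `{a₁, …, aₙ}`. -/
def aLink (n : ℕ) (h : 0 < n) : Mnn n := .a ⟨n - 1, Nat.sub_lt h Nat.one_pos⟩

/-- The link element `b₁` of the level `{b₁, …, bₙ}`. -/
def bLink (n : ℕ) (h : 0 < n) : Mnn n := .b ⟨0, h⟩

end Mnn

/-- `L` is `ST`-meet distributive. -/
def IsSTMeetDistrib {α : Type*} [Lattice α] (S T : Set α) : Prop :=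
  ∀ s ∈ S, ∀ t₁ ∈ T, ∀ t₂ ∈ T, s ⊓ (t₁ ⊔ t₂) = (s ⊓ t₁) ⊔ (s ⊓ t₂)

/-- `L` is `ST`-join distributive. -/
def IsSTJoinDistrib {α : Type*} [Lattice α] (S T : Set α) : Prop :=
  ∀ s ∈ S, ∀ t₁ ∈ T, ∀ t₂ ∈ T, s ⊔ (t₁ ⊓ t₂) = (s ⊔ t₁) ⊓ (s ⊔ t₂)

/-- `L` is `ST`-distributive. -/
def IsSTDistrib {α : Type*} [Lattice α] (S T : Set α) : Prop :=
  IsSTMeetDistrib S T ∧ IsSTJoinDistrib S T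

/-- `(S, T)` is a maximal `ST`-pair of `M_{n,n}` (subject to the conditions of
the search problem: `S, T ⊆ M_{n,n}*`, `S ∩ T = ∅`, `S ≠ ∅`, `T ≠ ∅`). -/
def MaximalSTPair (n : ℕ) (S T : Set (Mnn n)) : Prop :=
  S ⊆ Mnn.star n ∧ T ⊆ Mnn.star n ∧ S ∩ T = ∅ ∧ S.Nonempty ∧ T.Nonempty ∧
  IsSTDistrib S T ∧
  (¬ ∃ S' : Set (Mnn n), S ⊂ S' ∧ S' ⊆ Mnn.star n ∧ S' ∩ T = ∅ ∧ IsSTDistrib S' T) ∧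
  (¬ ∃ T' : Set (Mnn n), T ⊂ T' ∧ T' ⊆ Mnn.star n ∧ S ∩ T' = ∅ ∧ IsSTDistrib S T')

/-- Type 1 (T-chain): `T` is a chain contained in `M_{n,n}*` — explicitly one
of `{aᵢ}`, `{bᵢ}`, `{aᵢ, b₁}`, `{aₙ, bᵢ}` — and `S = M_{n,n}* ∖ T`. -/
def TypeTChain (n : ℕ) (h : 0 < n) (S T : Set (Mnn n)) : Prop :=
  IsChain (· ≤ ·) T ∧ S = Mnn.star n \ T ∧
  ∃ i : Fin n, T = {Mnn.a i} ∨ T = {Mnn.b i} ∨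
    T = {Mnn.a i, Mnn.bLink n h} ∨ T = {Mnn.aLink n h, Mnn.b i}

/-- Type 2 (S-link): `S = {b₁}` and `T = {a₁, …, aₙ, bᵢ}` with `i ≠ 1`, or
`S = {aₙ}` and `T = {aᵢ, b₁, …, bₙ}` with `i ≠ n`. -/
def TypeSLink (n : ℕ) (h : 0 < n) (S T : Set (Mnn n)) : Prop :=
  (∃ i : Fin n, Mnn.b i ≠ Mnn.bLink n h ∧ S = {Mnn.bLink n h} ∧
    T = Mnn.aLevel n ∪ {Mnn.b i}) ∨
  (∃ i : Fin n, Mnn.a i ≠ Mnn.aLink n h ∧ S = {Mnn.aLink n h} ∧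
    T = {Mnn.a i} ∪ Mnn.bLevel n)

/-- Type 3 (S-2-links): `S = {aₙ, b₁}` and `T = {aᵢ, bⱼ}` with `i ≠ n`,
`j ≠ 1`. -/
def TypeS2Links (n : ℕ) (h : 0 < n) (S T : Set (Mnn n)) : Prop :=
  ∃ i j : Fin n, Mnn.a i ≠ Mnn.aLink n h ∧ Mnn.b j ≠ Mnn.bLink n h ∧
    S = {Mnn.aLink n h, Mnn.bLink n h} ∧ T = {Mnn.a i, Mnn.b j}

/-- Type 4 (S-level): `S = {b₁, …, bₙ}` and `T = {aᵢ, aₙ}` with `i ≠ n`, or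
`S = {a₁, …, aₙ}` and `T = {b₁, bᵢ}` with `i ≠ 1`. -/
def TypeSLevel (n : ℕ) (h : 0 < n) (S T : Set (Mnn n)) : Prop :=
  (∃ i : Fin n, Mnn.a i ≠ Mnn.aLink n h ∧ S = Mnn.bLevel n ∧
    T = {Mnn.a i, Mnn.aLink n h}) ∨
  (∃ i : Fin n, Mnn.b i ≠ Mnn.bLink n h ∧ S = Mnn.aLevel n ∧
    T = {Mnn.bLink n h, Mnn.b i})

/-- Type 5 (S-level-minus-link): `S = {b₂, …, bₙ}` and `T = {aᵢ, aₙ, b₁}` with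
`i ≠ n`, or `S = {a₁, …, a_{n-1}}` and `T = {aₙ, b₁, bᵢ}` with `i ≠ 1`. -/
def TypeSLevelMinusLink (n : ℕ) (h : 0 < n) (S T : Set (Mnn n)) : Prop :=
  (∃ i : Fin n, Mnn.a i ≠ Mnn.aLink n h ∧ S = Mnn.bLevel n \ {Mnn.bLink n h} ∧
    T = {Mnn.a i, Mnn.aLink n h, Mnn.bLink n h}) ∨
  (∃ i : Fin n, Mnn.b i ≠ Mnn.bLink n h ∧ S = Mnn.aLevel n \ {Mnn.aLink n h} ∧
    T = {Mnn.aLink n h, Mnn.bLink n h, Mnn.b i})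

namespace Mnn

/-- The triple `(s, t₁, t₂)` satisfies both distributive laws. -/
def Compat {n : ℕ} (s t₁ t₂ : Mnn n) : Prop :=
  s ⊓ (t₁ ⊔ t₂) = (s ⊓ t₁) ⊔ (s ⊓ t₂) ∧ s ⊔ (t₁ ⊓ t₂) = (s ⊔ t₁) ⊓ (s ⊔ t₂)

theorem compat_comm {n : ℕ} (s t₁ t₂ : Mnn n) : Compat s t₁ t₂ ↔ Compat s t₂ t₁ := by
  unfold Compat
  rw [sup_comm t₁, inf_comm t₁, sup_comm (s ⊓ t₁), inf_comm (s ⊔ t₁)]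

theorem compat_self {n : ℕ} (s t : Mnn n) : Compat s t t := by
  simp [Compat]

theorem compat_of_le {n : ℕ} (s : Mnn n) {t₁ t₂ : Mnn n} (h : t₁ ≤ t₂) : Compat s t₁ t₂ := by
  rw [Compat, sup_eq_right.2 h, inf_eq_left.2 h, sup_eq_right.2 (inf_le_inf_left s h),
    inf_eq_left.2 (sup_le_sup_left h s)]
  exact ⟨rfl, rfl⟩

theorem isSTDistrib_iff {n : ℕ} (S T : Set (Mnn n)) :
    IsSTDistrib S T ↔ ∀ s ∈ S, ∀ t₁ ∈ T, ∀ t₂ ∈ T, Compat s t₁ t₂ := by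
  simp only [IsSTDistrib, IsSTMeetDistrib, IsSTJoinDistrib, Compat]
  grind

theorem sup_def {n : ℕ} (x y : Mnn n) : x ⊔ y = sup x y := rfl

theorem inf_def {n : ℕ} (x y : Mnn n) : x ⊓ y = inf x y := rfl

theorem compat_a_a_a {n : ℕ} (k i j : Fin n) :
    Compat (a k) (a i) (a j) ↔ i = j ∨ k = i ∨ k = j := by
  simp only [Compat, sup_def, inf_def]
  grind [sup, inf]

theorem compat_b_b_b {n : ℕ} (k i j : Fin n) :
    Compat (b k) (b i) (b j) ↔ i = j ∨ k = i ∨ k = j := by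
  simp only [Compat, sup_def, inf_def]
  grind [sup, inf]

theorem compat_b_a_a {n : ℕ} (k i j : Fin n) :
    Compat (b k) (a i) (a j) ↔
      i = j ∨ (k : ℕ) = 0 ∨ (i : ℕ) = n - 1 ∨ (j : ℕ) = n - 1 := by
  simp only [Compat, sup_def, inf_def]
  grind [sup, inf]

theorem compat_a_b_b {n : ℕ} (k i j : Fin n) :
    Compat (a k) (b i) (b j) ↔
      i = j ∨ (k : ℕ) = n - 1 ∨ (i : ℕ) = 0 ∨ (j : ℕ) = 0 := by
  simp only [Compat, sup_def, inf_def]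
  grind [sup, inf]

theorem compat_a_a_b {n : ℕ} (k i j : Fin n) :
    Compat (a k) (a i) (b j) ↔
      (i : ℕ) = n - 1 ∨ (j : ℕ) = 0 ∨ (k : ℕ) = n - 1 ∨ k = i := by
  simp only [Compat, sup_def, inf_def]
  grind [sup, inf]

theorem compat_b_a_b {n : ℕ} (k i j : Fin n) :
    Compat (b k) (a i) (b j) ↔
      (i : ℕ) = n - 1 ∨ (j : ℕ) = 0 ∨ (k : ℕ) = 0 ∨ k = j := by
  simp only [Compat, sup_def, inf_def]
  grind [sup, inf]

theorem compat_a_b_a {n : ℕ} (k i j : Fin n) :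
    Compat (a k) (b i) (a j) ↔
      (j : ℕ) = n - 1 ∨ (i : ℕ) = 0 ∨ (k : ℕ) = n - 1 ∨ k = j := by
  rw [compat_comm, compat_a_a_b]

theorem compat_b_b_a {n : ℕ} (k i j : Fin n) :
    Compat (b k) (b i) (a j) ↔
      (j : ℕ) = n - 1 ∨ (i : ℕ) = 0 ∨ (k : ℕ) = 0 ∨ k = i := by
  rw [compat_comm, compat_b_a_b]

attribute [local grind] compat_a_a_a compat_a_a_b compat_a_b_a compat_a_b_b
  compat_b_a_a compat_b_a_b compat_b_b_a compat_b_b_b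

theorem a_mem_star {n : ℕ} (i : Fin n) : a i ∈ star n := by simp [star]

theorem b_mem_star {n : ℕ} (i : Fin n) : b i ∈ star n := by simp [star]

theorem mem_star_iff {n : ℕ} (x : Mnn n) : x ∈ star n ↔ (∃ i, x = a i) ∨ ∃ i, x = b i := by
  cases x <;> simp [star]

/-- Maximality only has to be tested by adding single elements. -/
theorem maximalSTPair_iff {n : ℕ} (S T : Set (Mnn n)) :
    MaximalSTPair n S T ↔
      S ⊆ star n ∧ T ⊆ star n ∧ (∀ x ∈ S, x ∉ T) ∧ S.Nonempty ∧ T.Nonempty ∧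
      (∀ s ∈ S, ∀ t₁ ∈ T, ∀ t₂ ∈ T, Compat s t₁ t₂) ∧
      (∀ x ∈ star n, x ∉ S → x ∉ T → ∃ t₁ ∈ T, ∃ t₂ ∈ T, ¬ Compat x t₁ t₂) ∧
      (∀ x ∈ star n, x ∉ S → x ∉ T → ∃ s ∈ S, ∃ t ∈ T, ¬ Compat s x t) := by
  simp only [MaximalSTPair, isSTDistrib_iff]
  constructor
  · rintro ⟨hS, hT, hd, hS0, hT0, hC, hSm, hTm⟩
    have hd' : ∀ x ∈ S, x ∉ T := fun x hx hx' => (Set.ext_iff.1 hd x).1 ⟨hx, hx'⟩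
    refine ⟨hS, hT, hd', hS0, hT0, hC, ?_, ?_⟩
    · intro x hx hxS hxT
      by_contra! hcon
      refine hSm ⟨insert x S, Set.ssubset_insert hxS, Set.insert_subset hx hS, ?_, ?_⟩
      · rw [Set.insert_inter_of_notMem hxT, hd]
      · rintro s (rfl | hs)
        · exact hcon
        · exact hC s hs
    · intro x hx hxS hxT
      by_contra! hcon
      refine hTm ⟨insert x T, Set.ssubset_insert hxT, Set.insert_subset hx hT, ?_, ?_⟩
      · rw [Set.inter_insert_of_notMem hxS, hd]
      · rintro s hs t₁ (rfl | ht₁) t₂ (rfl | ht₂)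
        · exact compat_self _ _
        · exact hcon s hs t₂ ht₂
        · exact (compat_comm _ _ _).1 (hcon s hs t₁ ht₁)
        · exact hC s hs t₁ ht₁ t₂ ht₂
  · rintro ⟨hS, hT, hd, hS0, hT0, hC, hSm, hTm⟩
    refine ⟨hS, hT, ?_, hS0, hT0, hC, ?_, ?_⟩
    · ext x
      simpa using hd x
    · rintro ⟨S', hlt, hS', hd', hC'⟩
      obtain ⟨x, hx, hxS⟩ := Set.exists_of_ssubset hlt
      have hxT : x ∉ T := fun hxT => (Set.ext_iff.1 hd' x).1 ⟨hx, hxT⟩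
      obtain ⟨t₁, ht₁, t₂, ht₂, hne⟩ := hSm x (hS' hx) hxS hxT
      exact hne (hC' x hx t₁ ht₁ t₂ ht₂)
    · rintro ⟨T', hlt, hT', hd', hC'⟩
      obtain ⟨x, hx, hxT⟩ := Set.exists_of_ssubset hlt
      have hxS : x ∉ S := fun hxS => (Set.ext_iff.1 hd' x).1 ⟨hxS, hx⟩
      obtain ⟨s, hs, t, ht, hne⟩ := hTm x (hT' hx) hxS hxT
      exact hne (hC' s hs x hx t (hlt.subset ht))

theorem maximalSTPair_of_typeTChain {n : ℕ} (hn : 3 ≤ n) (h : 0 < n) {S T : Set (Mnn n)}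
    (hST : TypeTChain n h S T) : MaximalSTPair n S T := by
  obtain ⟨-, rfl, i, hT⟩ := hST
  obtain ⟨k, hk, hk'⟩ : ∃ k : Fin n, (k : ℕ) ≠ i ∧ (k : ℕ) ≠ n - 1 := by
    by_cases hi : (i : ℕ) = 0
    · exact ⟨⟨1, by omega⟩, by grind⟩
    · exact ⟨⟨0, by omega⟩, by grind⟩
  obtain ⟨l, hl, hl'⟩ : ∃ l : Fin n, (l : ℕ) ≠ i ∧ (l : ℕ) ≠ 0 := by
    by_cases hi : (i : ℕ) = 1
    · exact ⟨⟨2, by omega⟩, by grind⟩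
    · exact ⟨⟨1, by omega⟩, by grind⟩
  rw [maximalSTPair_iff]
  rcases hT with rfl | rfl | rfl | rfl
  all_goals
    refine ⟨Set.sdiff_subset, ?_, fun x hx => hx.2, ?_, by simp, ?_, ?_, ?_⟩
    · simp [Set.insert_subset_iff, star, aLink, bLink]
    · first
      | exact ⟨a k, by simp [star, aLink, bLink]; grind⟩
      | exact ⟨b l, by simp [star, aLink, bLink]; grind⟩
    · simp only [Set.mem_sdiff, mem_star_iff, Set.mem_insert_iff, Set.mem_singleton_iff, aLink,
        bLink]
      grind
    · intro x hx hxS hxT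
      exact absurd ⟨hx, hxT⟩ hxS
    · intro x hx hxS hxT
      exact absurd ⟨hx, hxT⟩ hxS

theorem maximalSTPair_of_typeSLink {n : ℕ} (hn : 3 ≤ n) (h : 0 < n) {S T : Set (Mnn n)}
    (hST : TypeSLink n h S T) : MaximalSTPair n S T := by
  rw [maximalSTPair_iff]
  rcases hST with ⟨i, hi, rfl, rfl⟩ | ⟨i, hi, rfl, rfl⟩ <;>
  simp only [aLink, bLink, aLevel, bLevel, ne_eq, a.injEq, b.injEq, Fin.ext_iff] at hi ⊢ <;>
  refine ⟨by simp [star], ?_, by simpa [Fin.ext_iff] using Ne.symm hi, by simp, by simp, ?_, ?_, ?_⟩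
  · rintro x (⟨j, rfl⟩ | rfl) <;> simp [star]
  · rintro s rfl t₁ (⟨j, rfl⟩ | rfl) t₂ (⟨k, rfl⟩ | rfl) <;> grind
  · intro x hx hxS hxT
    refine ⟨a ⟨0, by omega⟩, by simp, a ⟨1, by omega⟩, by simp, ?_⟩
    rcases (mem_star_iff x).1 hx with ⟨j, rfl⟩ | ⟨j, rfl⟩ <;> simp at hxS hxT <;> grind
  · intro x hx hxS hxT
    refine ⟨b ⟨0, h⟩, by simp, b i, by simp, ?_⟩
    rcases (mem_star_iff x).1 hx with ⟨j, rfl⟩ | ⟨j, rfl⟩ <;> simp at hxS hxT <;> grind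
  · rintro x (rfl | ⟨j, rfl⟩) <;> simp [star]
  · rintro s rfl t₁ (rfl | ⟨j, rfl⟩) t₂ (rfl | ⟨k, rfl⟩) <;> grind
  · intro x hx hxS hxT
    refine ⟨b ⟨1, by omega⟩, by simp, b ⟨2, by omega⟩, by simp, ?_⟩
    rcases (mem_star_iff x).1 hx with ⟨j, rfl⟩ | ⟨j, rfl⟩ <;> simp at hxS hxT <;> grind
  · intro x hx hxS hxT
    refine ⟨a ⟨n - 1, by omega⟩, by simp, a i, by simp, ?_⟩
    rcases (mem_star_iff x).1 hx with ⟨j, rfl⟩ | ⟨j, rfl⟩ <;> simp at hxS hxT <;> grind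

theorem maximalSTPair_of_typeS2Links {n : ℕ} (h : 0 < n) {S T : Set (Mnn n)}
    (hST : TypeS2Links n h S T) : MaximalSTPair n S T := by
  rw [maximalSTPair_iff]
  obtain ⟨i, j, hi, hj, rfl, rfl⟩ := hST
  simp only [aLink, bLink, ne_eq, a.injEq, b.injEq, Fin.ext_iff] at hi hj ⊢
  refine ⟨by simp [Set.insert_subset_iff, star], by simp [Set.insert_subset_iff, star],
    by simp; grind, by simp, by simp, ?_, ?_, ?_⟩
  · rintro s (rfl | rfl) t₁ (rfl | rfl) t₂ (rfl | rfl) <;> grind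
  · intro x hx hxS hxT
    refine ⟨a i, by simp, b j, by simp, ?_⟩
    rcases (mem_star_iff x).1 hx with ⟨k, rfl⟩ | ⟨k, rfl⟩ <;> simp at hxS hxT <;> grind
  · intro x hx hxS hxT
    rcases (mem_star_iff x).1 hx with ⟨k, rfl⟩ | ⟨k, rfl⟩
    · refine ⟨a ⟨n - 1, by omega⟩, by simp, a i, by simp, ?_⟩
      simp at hxS hxT
      grind
    · refine ⟨b ⟨0, h⟩, by simp, b j, by simp, ?_⟩
      simp at hxS hxT
      grind

theorem maximalSTPair_of_typeSLevel {n : ℕ} (hn : 3 ≤ n) (h : 0 < n) {S T : Set (Mnn n)}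
    (hST : TypeSLevel n h S T) : MaximalSTPair n S T := by
  rw [maximalSTPair_iff]
  rcases hST with ⟨i, hi, rfl, rfl⟩ | ⟨i, hi, rfl, rfl⟩ <;>
  simp only [aLink, bLink, aLevel, bLevel, ne_eq, a.injEq, b.injEq, Fin.ext_iff] at hi ⊢ <;>
  refine ⟨by rintro x ⟨j, rfl⟩; simp [star], by simp [Set.insert_subset_iff, star], by simp,
    ⟨_, ⟨⟨0, h⟩, rfl⟩⟩, by simp, ?_, ?_, ?_⟩
  · rintro s ⟨k, rfl⟩ t₁ (rfl | rfl) t₂ (rfl | rfl) <;> grind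
  · intro x hx hxS hxT
    refine ⟨a i, by simp, a ⟨n - 1, by omega⟩, by simp, ?_⟩
    rcases (mem_star_iff x).1 hx with ⟨j, rfl⟩ | ⟨j, rfl⟩ <;> simp at hxS hxT <;> grind
  · intro x hx hxS hxT
    refine ⟨b ⟨1, by omega⟩, by simp, a i, by simp, ?_⟩
    rcases (mem_star_iff x).1 hx with ⟨j, rfl⟩ | ⟨j, rfl⟩ <;> simp at hxS hxT <;> grind
  · rintro s ⟨k, rfl⟩ t₁ (rfl | rfl) t₂ (rfl | rfl) <;> grind
  · intro x hx hxS hxT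
    refine ⟨b ⟨0, h⟩, by simp, b i, by simp, ?_⟩
    rcases (mem_star_iff x).1 hx with ⟨j, rfl⟩ | ⟨j, rfl⟩ <;> simp at hxS hxT <;> grind
  · intro x hx hxS hxT
    refine ⟨a ⟨0, by omega⟩, by simp, b i, by simp, ?_⟩
    rcases (mem_star_iff x).1 hx with ⟨j, rfl⟩ | ⟨j, rfl⟩ <;> simp at hxS hxT <;> grind

theorem maximalSTPair_of_typeSLevelMinusLink {n : ℕ} (hn : 3 ≤ n) (h : 0 < n)
    {S T : Set (Mnn n)} (hST : TypeSLevelMinusLink n h S T) : MaximalSTPair n S T := by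
  rw [maximalSTPair_iff]
  rcases hST with ⟨i, hi, rfl, rfl⟩ | ⟨i, hi, rfl, rfl⟩ <;>
  simp only [aLink, bLink, aLevel, bLevel, ne_eq, a.injEq, b.injEq, Fin.ext_iff] at hi ⊢ <;>
  refine ⟨by rintro x ⟨⟨j, rfl⟩, -⟩; simp [star], by simp [Set.insert_subset_iff, star],
    by rintro x ⟨⟨j, rfl⟩, hj⟩; simp at hj ⊢; grind, ?_, by simp, ?_, ?_, ?_⟩
  · exact ⟨b ⟨1, by omega⟩, by simp⟩
  · rintro s ⟨⟨k, rfl⟩, hk⟩ t₁ (rfl | rfl | rfl) t₂ (rfl | rfl | rfl) <;> grind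
  · intro x hx hxS hxT
    refine ⟨a i, by simp, a ⟨n - 1, by omega⟩, by simp, ?_⟩
    rcases (mem_star_iff x).1 hx with ⟨j, rfl⟩ | ⟨j, rfl⟩ <;> simp at hxS hxT <;> grind
  · intro x hx hxS hxT
    refine ⟨b ⟨1, by omega⟩, by simp, a i, by simp, ?_⟩
    rcases (mem_star_iff x).1 hx with ⟨j, rfl⟩ | ⟨j, rfl⟩ <;> simp at hxS hxT <;> grind
  · exact ⟨a ⟨0, by omega⟩, by simp; omega⟩
  · rintro s ⟨⟨k, rfl⟩, hk⟩ t₁ (rfl | rfl | rfl) t₂ (rfl | rfl | rfl) <;> grind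
  · intro x hx hxS hxT
    refine ⟨b ⟨0, h⟩, by simp, b i, by simp, ?_⟩
    rcases (mem_star_iff x).1 hx with ⟨j, rfl⟩ | ⟨j, rfl⟩ <;> simp at hxS hxT <;> grind
  · intro x hx hxS hxT
    refine ⟨a ⟨0, by omega⟩, by simp; omega, b i, by simp, ?_⟩
    rcases (mem_star_iff x).1 hx with ⟨j, rfl⟩ | ⟨j, rfl⟩ <;> simp at hxS hxT <;> grind

theorem type_of_two_a_mem {n : ℕ} (hn : 3 ≤ n) (h : 0 < n) {S T : Set (Mnn n)}
    (hST : MaximalSTPair n S T) {i j : Fin n} (hij : i ≠ j) (hi : a i ∈ T) (hj : a j ∈ T) :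
    TypeSLink n h S T ∨ TypeSLevel n h S T ∨ TypeSLevelMinusLink n h S T := by
  obtain ⟨hS, hT, hd, ⟨s, hs⟩, -, hC, hSm, hTm⟩ := (maximalSTPair_iff S T).1 hST
  have hSa : ∀ k, a k ∉ S := fun k hk => by
    have := hC _ hk _ hi _ hj
    grind
  obtain ⟨m, rfl⟩ : ∃ m, s = b m := by
    rcases (mem_star_iff s).1 (hS hs) with ⟨m, rfl⟩ | hm
    · exact absurd hs (hSa m)
    · exact hm
  by_cases hB : ∃ l : Fin n, (l : ℕ) ≠ 0 ∧ b l ∈ T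
  · obtain ⟨l, hl0, hl⟩ := hB
    have hSb : ∀ k, b k ∈ S → (k : ℕ) = 0 := fun k hk => by
      have h1 := hC _ hk _ hi _ hl
      have h2 := hC _ hk _ hj _ hl
      grind
    have hm := hSb m hs
    have hTb : ∀ k, b k ∈ T → k = l := fun k hk => by
      have := hC _ hs _ hk _ hl
      grind
    have hSe : S = {bLink n h} := by
      ext x
      cases x <;> simp [bLink] <;> grind [star]
    refine Or.inl (Or.inl ⟨l, by simp [bLink]; grind, hSe, ?_⟩)
    ext x
    cases x with
    | bot => simp [aLevel]; grind [star]
    | top => simp [aLevel]; grind [star]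
    | a k =>
      simp only [aLevel, Set.mem_union, Set.mem_range_self, true_or, iff_true]
      by_contra hk
      obtain ⟨s, hs, t, ht, hne⟩ := hTm _ (a_mem_star k) (hSa k) hk
      rcases (mem_star_iff t).1 (hT ht) with ⟨m, rfl⟩ | ⟨m, rfl⟩ <;> grind [bLink]
    | b k => simp [aLevel]; grind
  · push Not at hB
    have hTa : ∀ k l, a k ∈ T → a l ∈ T → (k : ℕ) ≠ n - 1 → (l : ℕ) ≠ n - 1 → k = l := by
      intro k l hk hl hk' hl'
      by_contra hkl
      have hSb : ∀ p, b p ∈ S → (p : ℕ) = 0 := fun p hp => by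
        have := hC _ hp _ hk _ hl
        grind
      have hm := hSb m hs
      obtain ⟨s, hs', t, ht, hne⟩ := hTm (b ⟨1, by omega⟩) (b_mem_star _)
        (fun h1 => by simpa using hSb _ h1) (hB _ (by simp))
      rcases (mem_star_iff s).1 (hS hs') with ⟨p, rfl⟩ | ⟨p, rfl⟩ <;>
      rcases (mem_star_iff t).1 (hT ht) with ⟨q, rfl⟩ | ⟨q, rfl⟩ <;> grind
    obtain ⟨p, hp, hpT, hN⟩ : ∃ p : Fin n, (p : ℕ) ≠ n - 1 ∧ a p ∈ T ∧ aLink n h ∈ T := by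
      by_cases hi' : (i : ℕ) = n - 1
      · exact ⟨j, by grind, hj, by rwa [aLink, show (⟨n - 1, by omega⟩ : Fin n) = i from
          Fin.ext hi'.symm]⟩
      · have hj' : (j : ℕ) = n - 1 := by grind
        exact ⟨i, hi', hi, by rwa [aLink, show (⟨n - 1, by omega⟩ : Fin n) = j from
          Fin.ext hj'.symm]⟩
    rw [aLink] at hN
    have hSb : ∀ k, b k ∉ T → b k ∈ S := by
      intro k hk
      by_contra hkS
      obtain ⟨t₁, ht₁, t₂, ht₂, hne⟩ := hSm _ (b_mem_star k) hkS hk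
      rcases (mem_star_iff t₁).1 (hT ht₁) with ⟨q, rfl⟩ | ⟨q, rfl⟩ <;>
      rcases (mem_star_iff t₂).1 (hT ht₂) with ⟨r, rfl⟩ | ⟨r, rfl⟩ <;> grind
    refine Or.inr ?_
    by_cases h0 : bLink n h ∈ T
    · refine Or.inr (Or.inl ⟨p, by simp [aLink]; grind, ?_, ?_⟩)
      · ext x
        cases x <;> simp [bLevel, bLink] at h0 ⊢ <;> grind [star]
      · ext x
        cases x <;> simp [aLink, bLink] at h0 ⊢ <;> grind [star]
    · refine Or.inl (Or.inl ⟨p, by simp [aLink]; grind, ?_, ?_⟩)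
      · ext x
        cases x <;> simp [bLevel, bLink] at h0 ⊢ <;> grind [star]
      · ext x
        cases x <;> simp [aLink, bLink] at h0 ⊢ <;> grind [star]

theorem type_of_two_b_mem {n : ℕ} (hn : 3 ≤ n) (h : 0 < n) {S T : Set (Mnn n)}
    (hST : MaximalSTPair n S T) {i j : Fin n} (hij : i ≠ j) (hi : b i ∈ T) (hj : b j ∈ T) :
    TypeSLink n h S T ∨ TypeSLevel n h S T ∨ TypeSLevelMinusLink n h S T := by
  obtain ⟨hS, hT, hd, ⟨s, hs⟩, -, hC, hSm, hTm⟩ := (maximalSTPair_iff S T).1 hST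
  have hSb : ∀ k, b k ∉ S := fun k hk => by
    have := hC _ hk _ hi _ hj
    grind
  obtain ⟨m, rfl⟩ : ∃ m, s = a m := by
    rcases (mem_star_iff s).1 (hS hs) with hm | ⟨m, rfl⟩
    · exact hm
    · exact absurd hs (hSb m)
  by_cases hA : ∃ l : Fin n, (l : ℕ) ≠ n - 1 ∧ a l ∈ T
  · obtain ⟨l, hl0, hl⟩ := hA
    have hSa : ∀ k, a k ∈ S → (k : ℕ) = n - 1 := fun k hk => by
      have h1 := hC _ hk _ hl _ hi
      have h2 := hC _ hk _ hl _ hj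
      grind
    have hm := hSa m hs
    have hTa : ∀ k, a k ∈ T → k = l := fun k hk => by
      have := hC _ hs _ hk _ hl
      grind
    have hSe : S = {aLink n h} := by
      ext x
      cases x <;> simp [aLink] <;> grind [star]
    refine Or.inl (Or.inr ⟨l, by simp [aLink]; grind, hSe, ?_⟩)
    ext x
    cases x with
    | bot => simp [bLevel]; grind [star]
    | top => simp [bLevel]; grind [star]
    | a k => simp [bLevel]; grind
    | b k =>
      simp only [bLevel, Set.mem_union, Set.mem_range_self, or_true, iff_true]
      by_contra hk
      obtain ⟨s, hs, t, ht, hne⟩ := hTm _ (b_mem_star k) (hSb k) hk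
      rcases (mem_star_iff t).1 (hT ht) with ⟨m, rfl⟩ | ⟨m, rfl⟩ <;> grind [aLink]
  · push Not at hA
    have hTb : ∀ k l, b k ∈ T → b l ∈ T → (k : ℕ) ≠ 0 → (l : ℕ) ≠ 0 → k = l := by
      intro k l hk hl hk' hl'
      by_contra hkl
      have hSa : ∀ p, a p ∈ S → (p : ℕ) = n - 1 := fun p hp => by
        have := hC _ hp _ hk _ hl
        grind
      have hm := hSa m hs
      obtain ⟨s, hs', t, ht, hne⟩ := hTm (a ⟨0, h⟩) (a_mem_star _)
        (fun h1 => by have := hSa _ h1; grind) (hA _ (by grind))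
      rcases (mem_star_iff s).1 (hS hs') with ⟨p, rfl⟩ | ⟨p, rfl⟩ <;>
      rcases (mem_star_iff t).1 (hT ht) with ⟨q, rfl⟩ | ⟨q, rfl⟩ <;> grind
    obtain ⟨p, hp, hpT, h0⟩ : ∃ p : Fin n, (p : ℕ) ≠ 0 ∧ b p ∈ T ∧ bLink n h ∈ T := by
      by_cases hi' : (i : ℕ) = 0
      · exact ⟨j, by grind, hj, by rwa [bLink, show (⟨0, h⟩ : Fin n) = i from
          Fin.ext hi'.symm]⟩
      · have hj' : (j : ℕ) = 0 := by grind
        exact ⟨i, hi', hi, by rwa [bLink, show (⟨0, h⟩ : Fin n) = j from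
          Fin.ext hj'.symm]⟩
    rw [bLink] at h0
    have hSa : ∀ k, a k ∉ T → a k ∈ S := by
      intro k hk
      by_contra hkS
      obtain ⟨t₁, ht₁, t₂, ht₂, hne⟩ := hSm _ (a_mem_star k) hkS hk
      rcases (mem_star_iff t₁).1 (hT ht₁) with ⟨q, rfl⟩ | ⟨q, rfl⟩ <;>
      rcases (mem_star_iff t₂).1 (hT ht₂) with ⟨r, rfl⟩ | ⟨r, rfl⟩ <;> grind
    refine Or.inr ?_
    by_cases hN : aLink n h ∈ T
    · refine Or.inr (Or.inr ⟨p, by simp [bLink]; grind, ?_, ?_⟩)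
      · ext x
        cases x <;> simp [aLevel, aLink] at hN ⊢ <;> grind [star]
      · ext x
        cases x <;> simp [aLink, bLink] at hN ⊢ <;> grind [star]
    · refine Or.inl (Or.inr ⟨p, by simp [bLink]; grind, ?_, ?_⟩)
      · ext x
        cases x <;> simp [aLevel, aLink] at hN ⊢ <;> grind [star]
      · ext x
        cases x <;> simp [aLink, bLink] at hN ⊢ <;> grind [star]

theorem type_of_subsingleton {n : ℕ} (h : 0 < n) {S T : Set (Mnn n)}
    (hST : MaximalSTPair n S T) (ha : ∀ i j, a i ∈ T → a j ∈ T → i = j)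
    (hb : ∀ i j, b i ∈ T → b j ∈ T → i = j) :
    TypeTChain n h S T ∨ TypeS2Links n h S T := by
  obtain ⟨hS, hT, hd, -, ⟨t, ht⟩, hC, hSm, -⟩ := (maximalSTPair_iff S T).1 hST
  have hbot : bot ∉ T := fun hx => by simpa [star] using hT hx
  have htop : top ∉ T := fun hx => by simpa [star] using hT hx
  have hbot' : bot ∉ S := fun hx => by simpa [star] using hS hx
  have htop' : top ∉ S := fun hx => by simpa [star] using hS hx
  by_cases hab : ∃ i j : Fin n, (i : ℕ) ≠ n - 1 ∧ (j : ℕ) ≠ 0 ∧ a i ∈ T ∧ b j ∈ T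
  · obtain ⟨i, j, hi, hj, hiT, hjT⟩ := hab
    have hTe : T = {a i, b j} := by
      ext x
      cases x <;> simp <;> grind
    have hSa : ∀ k, a k ∈ S ↔ (k : ℕ) = n - 1 := fun k => by
      constructor
      · intro hk
        have := hC _ hk _ hiT _ hjT
        grind
      · intro hk
        by_contra hkS
        obtain ⟨t₁, ht₁, t₂, ht₂, hne⟩ := hSm _ (a_mem_star k) hkS (by grind)
        simp only [hTe, Set.mem_insert_iff, Set.mem_singleton_iff] at ht₁ ht₂
        grind
    have hSb : ∀ k, b k ∈ S ↔ (k : ℕ) = 0 := fun k => by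
      constructor
      · intro hk
        have := hC _ hk _ hiT _ hjT
        grind
      · intro hk
        by_contra hkS
        obtain ⟨t₁, ht₁, t₂, ht₂, hne⟩ := hSm _ (b_mem_star k) hkS (by grind)
        simp only [hTe, Set.mem_insert_iff, Set.mem_singleton_iff] at ht₁ ht₂
        grind
    refine Or.inr ⟨i, j, by simp [aLink]; grind, by simp [bLink]; grind, ?_, hTe⟩
    ext x
    cases x <;> simp [aLink, bLink, hSa, hSb, hbot', htop', Fin.ext_iff]
  · push Not at hab
    left
    have hchain : IsChain (· ≤ ·) T := by
      intro x hx y hy hxy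
      change le x y ∨ le y x
      cases x <;> cases y <;> simp only [le] <;> grind
    refine ⟨hchain, ?_, ?_⟩
    · ext x
      refine ⟨fun hx => ⟨hS hx, hd x hx⟩, fun ⟨hx, hxT⟩ => ?_⟩
      by_contra hxS
      obtain ⟨t₁, ht₁, t₂, ht₂, hne⟩ := hSm x hx hxS hxT
      apply hne
      rcases eq_or_ne t₁ t₂ with rfl | hne'
      · exact compat_self _ _
      rcases hchain ht₁ ht₂ hne' with hle | hle
      · exact compat_of_le _ hle
      · exact (compat_comm _ _ _).1 (compat_of_le _ hle)
    · by_cases hA : ∃ i, a i ∈ T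
      · obtain ⟨i, hi⟩ := hA
        by_cases hB : ∃ j, b j ∈ T
        · obtain ⟨j, hj⟩ := hB
          have hTe : T = {a i, b j} := by
            ext x
            cases x <;> simp <;> grind
          by_cases hj0 : (j : ℕ) = 0
          · refine ⟨i, Or.inr (Or.inr (Or.inl ?_))⟩
            rw [hTe, bLink, show j = ⟨0, h⟩ from Fin.ext hj0]
          · have hi0 : (i : ℕ) = n - 1 := by grind
            refine ⟨j, Or.inr (Or.inr (Or.inr ?_))⟩
            rw [hTe, aLink, show i = ⟨n - 1, by omega⟩ from Fin.ext hi0]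
        · refine ⟨i, Or.inl ?_⟩
          ext x
          cases x <;> simp <;> grind
      · obtain ⟨j, rfl⟩ : ∃ j, t = b j := by
          rcases (mem_star_iff t).1 (hT ht) with ⟨m, rfl⟩ | hm
          · exact absurd ⟨m, ht⟩ hA
          · exact hm
        refine ⟨j, Or.inr (Or.inl ?_)⟩
        ext x
        cases x <;> simp <;> grind

/-- Every maximal pair has one of the five types. -/
theorem maximalSTPair_iff_type {n : ℕ} (hn : 3 ≤ n) (h : 0 < n) (S T : Set (Mnn n)) :
    MaximalSTPair n S T ↔ TypeTChain n h S T ∨ TypeSLink n h S T ∨ TypeS2Links n h S T ∨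
      TypeSLevel n h S T ∨ TypeSLevelMinusLink n h S T := by
  constructor
  · intro hST
    by_cases ha : ∀ i j, a i ∈ T → a j ∈ T → i = j
    · by_cases hb : ∀ i j, b i ∈ T → b j ∈ T → i = j
      · have := type_of_subsingleton h hST ha hb
        tauto
      · push Not at hb
        obtain ⟨i, j, hi, hj, hij⟩ := hb
        have := type_of_two_b_mem hn h hST hij hi hj
        tauto
    · push Not at ha
      obtain ⟨i, j, hi, hj, hij⟩ := ha
      have := type_of_two_a_mem hn h hST hij hi hj
      tauto
  · rintro (hST | hST | hST | hST | hST)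
    · exact maximalSTPair_of_typeTChain hn h hST
    · exact maximalSTPair_of_typeSLink hn h hST
    · exact maximalSTPair_of_typeS2Links h hST
    · exact maximalSTPair_of_typeSLevel hn h hST
    · exact maximalSTPair_of_typeSLevelMinusLink hn h hST

theorem card_a_ne_aLink {n : ℕ} (h : 0 < n) :
    Nat.card {i : Fin n // a i ≠ aLink n h} = n - 1 := by
  simp [aLink]

theorem card_b_ne_bLink {n : ℕ} (h : 0 < n) :
    Nat.card {i : Fin n // b i ≠ bLink n h} = n - 1 := by
  simp [bLink]

theorem ncard_range_of_injective {α β : Type*} {f : α → β} (hf : Function.Injective f) :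
    (Set.range f).ncard = Nat.card α := by
  rw [← Set.image_univ, Set.ncard_image_of_injective _ hf, Set.ncard_univ]

/-- The chains of `M_{n,n}*`, each listed once. -/
def chain (n : ℕ) (h : 0 < n) :
    Fin n ⊕ Fin n ⊕ Fin n ⊕ {i : Fin n // b i ≠ bLink n h} → Set (Mnn n) :=
  Sum.elim (fun i => {a i}) <| Sum.elim (fun i => {b i}) <|
    Sum.elim (fun i => {a i, bLink n h}) fun i => {aLink n h, b i}

theorem chain_injective {n : ℕ} (h : 0 < n) : Function.Injective (chain n h) := by
  intro x y hxy
  have ha : ∀ k, a k ∈ chain n h x ↔ a k ∈ chain n h y := fun k => by rw [hxy]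
  have hb : ∀ k, b k ∈ chain n h x ↔ b k ∈ chain n h y := fun k => by rw [hxy]
  rcases x with i | i | i | ⟨i, hi⟩ <;> rcases y with j | j | j | ⟨j, hj⟩ <;>
  simp [chain, aLink, bLink] at * <;> grind [bLink]

theorem ncard_typeTChain {n : ℕ} (h : 0 < n) :
    {p : Set (Mnn n) × Set (Mnn n) | TypeTChain n h p.1 p.2}.ncard = 4 * n - 1 := by
  have hset : {p : Set (Mnn n) × Set (Mnn n) | TypeTChain n h p.1 p.2} =
      Set.range fun x => (star n \ chain n h x, chain n h x) := by
    ext ⟨S, T⟩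
    simp only [Set.mem_ofPred_eq, Set.mem_range, Prod.mk.injEq]
    constructor
    · rintro ⟨-, rfl, i, rfl | rfl | rfl | rfl⟩
      · exact ⟨.inl i, rfl, rfl⟩
      · exact ⟨.inr (.inl i), rfl, rfl⟩
      · exact ⟨.inr (.inr (.inl i)), rfl, rfl⟩
      · by_cases hi : b i = bLink n h
        · rw [hi]
          exact ⟨.inr (.inr (.inl ⟨n - 1, by omega⟩)), rfl, rfl⟩
        · exact ⟨.inr (.inr (.inr ⟨i, hi⟩)), rfl, rfl⟩
    · rintro ⟨x, rfl, rfl⟩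
      refine ⟨?_, rfl, ?_⟩
      · rcases x with i | i | i | ⟨i, hi⟩
        · exact IsChain.singleton
        · exact IsChain.singleton
        · exact IsChain.pair (show le (a i) (bLink n h) from Or.inl rfl)
        · exact IsChain.pair (show le (aLink n h) (b i) from Or.inr rfl)
      · rcases x with i | i | i | ⟨i, hi⟩ <;> exact ⟨i, by simp [chain]⟩
  rw [hset, ncard_range_of_injective fun x y hxy => chain_injective h (Prod.ext_iff.1 hxy).2]
  simp only [Nat.card_sum, Nat.card_fin, card_b_ne_bLink]
  omega

theorem ncard_typeS2Links {n : ℕ} (h : 0 < n) :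
    {p : Set (Mnn n) × Set (Mnn n) | TypeS2Links n h p.1 p.2}.ncard = (n - 1) * (n - 1) := by
  let f : {i : Fin n // a i ≠ aLink n h} × {j : Fin n // b j ≠ bLink n h} →
      Set (Mnn n) × Set (Mnn n) := fun q => ({aLink n h, bLink n h}, {a q.1, b q.2})
  have hset : {p : Set (Mnn n) × Set (Mnn n) | TypeS2Links n h p.1 p.2} = Set.range f := by
    ext ⟨S, T⟩
    simp only [Set.mem_ofPred_eq, Set.mem_range, f, Prod.mk.injEq]
    constructor
    · rintro ⟨i, j, hi, hj, rfl, rfl⟩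
      exact ⟨⟨⟨i, hi⟩, ⟨j, hj⟩⟩, rfl, rfl⟩
    · rintro ⟨⟨⟨i, hi⟩, ⟨j, hj⟩⟩, rfl, rfl⟩
      exact ⟨i, j, hi, hj, rfl, rfl⟩
  have hf : Function.Injective f := by
    intro x y hxy
    have ha : ∀ k, a k ∈ (f x).2 ↔ a k ∈ (f y).2 := fun k => by rw [hxy]
    have hb : ∀ k, b k ∈ (f x).2 ↔ b k ∈ (f y).2 := fun k => by rw [hxy]
    simp [f] at ha hb
    grind
  rw [hset, ncard_range_of_injective hf, Nat.card_prod, card_a_ne_aLink, card_b_ne_bLink]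

/-- A family of pairs that is indexed injectively by the non-link elements has `2n - 2` members. -/
theorem ncard_of_nonlink_index {n : ℕ} (h : 0 < n) {P : Set (Set (Mnn n) × Set (Mnn n))}
    (f g : Fin n → Set (Mnn n) × Set (Mnn n))
    (hP : ∀ p, p ∈ P ↔ (∃ i, a i ≠ aLink n h ∧ f i = p) ∨ ∃ i, b i ≠ bLink n h ∧ g i = p)
    (hf : ∀ i j, a j ≠ aLink n h → (a j ∈ (f i).2 ↔ j = i))
    (hg : ∀ i j, b j ≠ bLink n h → (b j ∈ (g i).2 ↔ j = i))
    (hfg : ∀ i j, (f i).1 ≠ (g j).1) : P.ncard = 2 * n - 2 := by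
  let F : {i : Fin n // a i ≠ aLink n h} ⊕ {i : Fin n // b i ≠ bLink n h} →
      Set (Mnn n) × Set (Mnn n) := Sum.elim (fun i => f i) fun i => g i
  have hset : P = Set.range F := by
    ext p
    rw [hP]
    simp [F]
  have hF : Function.Injective F := by
    rintro (⟨i, hi⟩ | ⟨i, hi⟩) (⟨j, hj⟩ | ⟨j, hj⟩) hij <;>
    simp only [F, Sum.elim_inl, Sum.elim_inr] at hij
    · have := hf j i hi
      rw [← hij, hf i i hi] at this
      simpa using this
    · exact absurd (congrArg Prod.fst hij) (hfg i j)
    · exact absurd (congrArg Prod.fst hij.symm) (hfg j i)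
    · have := hg j i hi
      rw [← hij, hg i i hi] at this
      simpa using this
  rw [hset, ncard_range_of_injective hF, Nat.card_sum, card_a_ne_aLink, card_b_ne_bLink]
  omega

theorem bLevel_ne_aLevel {n : ℕ} (h : 0 < n) : bLevel n ≠ aLevel n := by
  intro heq
  have : a ⟨0, h⟩ ∈ bLevel n := by rw [heq]; exact ⟨_, rfl⟩
  simp [bLevel] at this

theorem ncard_typeSLink {n : ℕ} (h : 0 < n) :
    {p : Set (Mnn n) × Set (Mnn n) | TypeSLink n h p.1 p.2}.ncard = 2 * n - 2 := by
  refine ncard_of_nonlink_index h (fun i => ({aLink n h}, {a i} ∪ bLevel n))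
    (fun i => ({bLink n h}, aLevel n ∪ {b i})) ?_ ?_ ?_ ?_
  · rintro ⟨S, T⟩
    simp only [Set.mem_ofPred_eq, TypeSLink, Prod.mk.injEq]
    grind
  · simp [bLevel]
  · simp [aLevel]
  · simp [aLink, bLink]

theorem ncard_typeSLevel {n : ℕ} (h : 0 < n) :
    {p : Set (Mnn n) × Set (Mnn n) | TypeSLevel n h p.1 p.2}.ncard = 2 * n - 2 := by
  refine ncard_of_nonlink_index h (fun i => (bLevel n, {a i, aLink n h}))
    (fun i => (aLevel n, {bLink n h, b i})) ?_ ?_ ?_ ?_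
  · rintro ⟨S, T⟩
    simp only [Set.mem_ofPred_eq, TypeSLevel, Prod.mk.injEq]
    grind
  · simp +contextual
  · simp +contextual
  · exact fun _ _ => bLevel_ne_aLevel h

theorem ncard_typeSLevelMinusLink {n : ℕ} (hn : 3 ≤ n) (h : 0 < n) :
    {p : Set (Mnn n) × Set (Mnn n) | TypeSLevelMinusLink n h p.1 p.2}.ncard = 2 * n - 2 := by
  refine ncard_of_nonlink_index h
    (fun i => (bLevel n \ {bLink n h}, {a i, aLink n h, bLink n h}))
    (fun i => (aLevel n \ {aLink n h}, {aLink n h, bLink n h, b i})) ?_ ?_ ?_ ?_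
  · rintro ⟨S, T⟩
    simp only [Set.mem_ofPred_eq, TypeSLevelMinusLink, Prod.mk.injEq]
    grind
  · simp +contextual [bLink]
  · simp +contextual [aLink]
  · intro i j heq
    simp only at heq
    have : b ⟨1, by omega⟩ ∈ aLevel n \ {aLink n h} := by
      rw [← heq]
      simp [bLevel, bLink]
    simp [aLevel] at this

theorem TypeTChain.mem_or_mem {n : ℕ} {h : 0 < n} {S T : Set (Mnn n)}
    (hST : TypeTChain n h S T) : ∀ x ∈ star n, x ∈ S ∨ x ∈ T := by
  obtain ⟨-, rfl, -⟩ := hST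
  exact fun x hx => or_iff_not_imp_right.2 fun hxT => ⟨hx, hxT⟩

theorem exists_ne_and_ne {n : ℕ} (hn : 3 ≤ n) (i j : Fin n) : ∃ k : Fin n, k ≠ i ∧ k ≠ j := by
  obtain ⟨k, hk⟩ := Finset.exists_mem_notMem_of_card_lt_card (s := {i, j}) (t := Finset.univ)
    (by simpa using Finset.card_le_two.trans_lt hn)
  exact ⟨k, by simpa using hk.2⟩

theorem TypeSLink.links {n : ℕ} {h : 0 < n} {S T : Set (Mnn n)} (hST : TypeSLink n h S T) :
    ¬(aLink n h ∈ S ↔ bLink n h ∈ S) ∧ S ⊆ {aLink n h, bLink n h} := by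
  rcases hST with ⟨i, hi, rfl, rfl⟩ | ⟨i, hi, rfl, rfl⟩ <;> simp [aLink, bLink]

theorem TypeS2Links.links {n : ℕ} {h : 0 < n} {S T : Set (Mnn n)} (hST : TypeS2Links n h S T) :
    aLink n h ∈ S ∧ bLink n h ∈ S := by
  obtain ⟨i, j, hi, hj, rfl, rfl⟩ := hST
  simp

theorem TypeSLevel.links {n : ℕ} (hn : 3 ≤ n) {h : 0 < n} {S T : Set (Mnn n)}
    (hST : TypeSLevel n h S T) :
    ¬(aLink n h ∈ S ↔ bLink n h ∈ S) ∧ ¬S ⊆ {aLink n h, bLink n h} := by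
  rcases hST with ⟨i, hi, rfl, rfl⟩ | ⟨i, hi, rfl, rfl⟩
  · refine ⟨by simp [aLink, bLink, bLevel], fun hsub => ?_⟩
    have : b ⟨1, by omega⟩ ∈ ({aLink n h, bLink n h} : Set (Mnn n)) := hsub ⟨_, rfl⟩
    simp [aLink, bLink] at this
  · refine ⟨by simp [aLink, bLink, aLevel], fun hsub => ?_⟩
    have : a ⟨0, h⟩ ∈ ({aLink n h, bLink n h} : Set (Mnn n)) := hsub ⟨_, rfl⟩
    simp [aLink, bLink] at this
    omega

theorem TypeSLevelMinusLink.links {n : ℕ} {h : 0 < n} {S T : Set (Mnn n)}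
    (hST : TypeSLevelMinusLink n h S T) : aLink n h ∉ S ∧ bLink n h ∉ S := by
  rcases hST with ⟨i, hi, rfl, rfl⟩ | ⟨i, hi, rfl, rfl⟩ <;> simp [aLink, bLink, aLevel, bLevel]

theorem exists_notMem_of_not_chain {n : ℕ} (hn : 3 ≤ n) {h : 0 < n} {S T : Set (Mnn n)}
    (hST : TypeSLink n h S T ∨ TypeS2Links n h S T ∨ TypeSLevel n h S T ∨
      TypeSLevelMinusLink n h S T) : ∃ x ∈ star n, x ∉ S ∧ x ∉ T := by
  rcases hST with (⟨i, hi, rfl, rfl⟩ | ⟨i, hi, rfl, rfl⟩) | ⟨i, j, hi, hj, rfl, rfl⟩ |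
    (⟨i, hi, rfl, rfl⟩ | ⟨i, hi, rfl, rfl⟩) | (⟨i, hi, rfl, rfl⟩ | ⟨i, hi, rfl, rfl⟩)
  all_goals
    obtain ⟨k, hk, hkN⟩ := exists_ne_and_ne hn i ⟨n - 1, by omega⟩
    obtain ⟨l, hl, hl0⟩ := exists_ne_and_ne hn i ⟨0, h⟩
    first
    | refine ⟨a k, a_mem_star k, ?_⟩
      simp [aLink, bLink, aLevel, bLevel, hk, hkN]
      done
    | refine ⟨b l, b_mem_star l, ?_⟩
      simp [aLink, bLink, aLevel, hl, hl0]

end Mnn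

open Mnn in
/-- Count of maximal `ST`-pairs of `M_{n,n}`: there are exactly `n² + 8n − 6`
of them, divided among the five types as `4n − 1` T-chain pairs, `2n − 2`
S-link pairs, `n² − 2n + 1` S-2-links pairs, `2n − 2` S-level pairs, and
`2n − 2` S-level-minus-link pairs. -/
theorem count_of_maximal_ST_pairs (n : ℕ) (hn : 3 ≤ n) :
    {p : Set (Mnn n) × Set (Mnn n) | MaximalSTPair n p.1 p.2}.ncard
      = n ^ 2 + 8 * n - 6 ∧
    {p : Set (Mnn n) × Set (Mnn n) |
      MaximalSTPair n p.1 p.2 ∧ TypeTChain n (by omega) p.1 p.2}.ncard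
      = 4 * n - 1 ∧
    {p : Set (Mnn n) × Set (Mnn n) |
      MaximalSTPair n p.1 p.2 ∧ TypeSLink n (by omega) p.1 p.2}.ncard
      = 2 * n - 2 ∧
    {p : Set (Mnn n) × Set (Mnn n) |
      MaximalSTPair n p.1 p.2 ∧ TypeS2Links n (by omega) p.1 p.2}.ncard
      = n ^ 2 - 2 * n + 1 ∧
    {p : Set (Mnn n) × Set (Mnn n) |
      MaximalSTPair n p.1 p.2 ∧ TypeSLevel n (by omega) p.1 p.2}.ncard
      = 2 * n - 2 ∧
    {p : Set (Mnn n) × Set (Mnn n) |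
      MaximalSTPair n p.1 p.2 ∧ TypeSLevelMinusLink n (by omega) p.1 p.2}.ncard
      = 2 * n - 2 := by
  have h : 0 < n := by omega
  have drop_max : ∀ Q : Set (Mnn n) → Set (Mnn n) → Prop,
      (∀ S T, Q S T → MaximalSTPair n S T) →
      {p : Set (Mnn n) × Set (Mnn n) | MaximalSTPair n p.1 p.2 ∧ Q p.1 p.2} =
        {p | Q p.1 p.2} :=
    fun Q hQ => Set.ext fun p => and_iff_right_of_imp (hQ p.1 p.2)
  rw [drop_max _ fun _ _ => maximalSTPair_of_typeTChain hn h,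
    drop_max _ fun _ _ => maximalSTPair_of_typeSLink hn h,
    drop_max _ fun _ _ => maximalSTPair_of_typeS2Links h,
    drop_max _ fun _ _ => maximalSTPair_of_typeSLevel hn h,
    drop_max _ fun _ _ => maximalSTPair_of_typeSLevelMinusLink hn h]
  have hsq : (n - 1) * (n - 1) = n ^ 2 - 2 * n + 1 := by
    obtain ⟨m, rfl⟩ : ∃ m, n = m + 1 := ⟨n - 1, by omega⟩
    have : (m + 1) ^ 2 = m * m + 2 * m + 1 := by ring
    have : 3 * m ≤ m * m + m := by nlinarith
    rw [Nat.add_sub_cancel]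
    omega
  refine ⟨?_, ncard_typeTChain h, ncard_typeSLink h, (ncard_typeS2Links h).trans hsq,
    ncard_typeSLevel h, ncard_typeSLevelMinusLink hn h⟩
  have hpos : 0 < (n - 1) * (n - 1) := Nat.mul_pos (by omega) (by omega)
  have c₁ := ncard_typeTChain h
  have c₂ := ncard_typeSLink h
  have c₃ := ncard_typeS2Links h
  have c₄ := ncard_typeSLevel h
  have c₅ := ncard_typeSLevelMinusLink hn h
  have f₁ := Set.finite_of_ncard_pos (c₁.trans_gt (by omega))
  have f₂ := Set.finite_of_ncard_pos (c₂.trans_gt (by omega))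
  have f₃ := Set.finite_of_ncard_pos (c₃.trans_gt hpos)
  have f₄ := Set.finite_of_ncard_pos (c₄.trans_gt (by omega))
  have f₅ := Set.finite_of_ncard_pos (c₅.trans_gt (by omega))
  have hunion : {p : Set (Mnn n) × Set (Mnn n) | MaximalSTPair n p.1 p.2} =
      {p | TypeTChain n h p.1 p.2} ∪ ({p | TypeSLink n h p.1 p.2} ∪
        ({p | TypeS2Links n h p.1 p.2} ∪ ({p | TypeSLevel n h p.1 p.2} ∪
          {p | TypeSLevelMinusLink n h p.1 p.2}))) :=
    Set.ext fun p => maximalSTPair_iff_type hn h p.1 p.2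
  rw [hunion, Set.ncard_union_eq _ f₁ (f₂.union (f₃.union (f₄.union f₅))),
    Set.ncard_union_eq _ f₂ (f₃.union (f₄.union f₅)),
    Set.ncard_union_eq _ f₃ (f₄.union f₅), Set.ncard_union_eq _ f₄ f₅, c₁, c₂, c₃, c₄, c₅, hsq]
  · have : 3 * n ≤ n ^ 2 := by nlinarith
    omega
  · rw [Set.disjoint_left]
    intro p h₄ h₅
    have := TypeSLevel.links hn h₄
    have := TypeSLevelMinusLink.links h₅
    tauto
  · rw [Set.disjoint_left]
    rintro p h₃ (h₄ | h₅)
    · have := TypeS2Links.links h₃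
      have := TypeSLevel.links hn h₄
      tauto
    · have := TypeS2Links.links h₃
      have := TypeSLevelMinusLink.links h₅
      tauto
  · rw [Set.disjoint_left]
    rintro p h₂ (h₃ | h₄ | h₅)
    · have := TypeSLink.links h₂
      have := TypeS2Links.links h₃
      tauto
    · exact (TypeSLevel.links hn h₄).2 (TypeSLink.links h₂).2
    · have := TypeSLink.links h₂
      have := TypeSLevelMinusLink.links h₅
      tauto
  · rw [Set.disjoint_left]
    intro p h₁ hp
    obtain ⟨x, hx, hxS, hxT⟩ := exists_notMem_of_not_chain hn hp
    exact (TypeTChain.mem_or_mem h₁ x hx).elim hxS hxT
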